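/- For every integer n ≥ 4, the wheel graph W_n of order n (the join of a single vertex with the cycle C_{n−1}) satisfies χ'^t_d(W_n) = n − 1. -/

import Mathlib

/-!
Write `m = n - 1 ≥ 3`. The `m` spokes of the wheel pairwise share the hub, so any proper edge
coloring uses at least `m` colors. Conversely, with rim vertices indexed by `Fin m`, give the spoke
at `i` the color `i` and the rim edge `{i, i + 1}` the color `i - 1`. This is proper because neither
`1` nor `2` vanishes in `Fin m`, and the color class of `i` consists of the spoke at `i` and the rim
edge `{i + 1, i + 2}`. Hence the spoke at `j` is adjacent to all of class `j - 1`, and the rim edge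
`{j, j + 1}` is adjacent to all of class `j`.
-/

open SimpleGraph

/-- Two edges of a simple graph are adjacent if they are distinct and share an endpoint. -/
def edgeAdj {V : Type*} (e f : Sym2 V) : Prop :=
  e ≠ f ∧ ∃ v, v ∈ e ∧ v ∈ f

/-- `c` is a total dominator edge coloring of `G` using colors from `{0, …, n-1}`:
a proper edge coloring such that every edge is adjacent to every edge of some
nonempty color class. -/
def IsTDEColoring {V : Type*} (G : SimpleGraph V) (n : ℕ) (c : Sym2 V → ℕ) : Prop :=
  (∀ e ∈ G.edgeSet, c e < n) ∧
  (∀ e ∈ G.edgeSet, ∀ f ∈ G.edgeSet, edgeAdj e f → c e ≠ c f) ∧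
  (∀ e ∈ G.edgeSet, ∃ i, (∃ f ∈ G.edgeSet, c f = i) ∧
      ∀ f ∈ G.edgeSet, c f = i → edgeAdj e f)

/-- The total dominator edge chromatic number of `G`: the minimum number of colors
in a total dominator edge coloring of `G`. -/
noncomputable def tdec {V : Type*} (G : SimpleGraph V) : ℕ :=
  sInf {n | ∃ c : Sym2 V → ℕ, IsTDEColoring G n c}

/-- The wheel graph of order `m + 1`: the join of a single hub vertex with the
cycle `C_m`. -/
def wheelGraph (m : ℕ) : SimpleGraph (Unit ⊕ Fin m) :=
  SimpleGraph.fromRel (fun x y =>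
    match x, y with
    | .inl _, .inr _ => True
    | .inr a, .inr b => (cycleGraph m).Adj a b
    | _, _ => False)

/-- The edges of the wheel with `k + 3` rim vertices: `Sum.inl i` is the spoke at `i`, and
`Sum.inr i` is the rim edge joining `i` to its cyclic successor. -/
def wheelEdge (k : ℕ) : Fin (k + 3) ⊕ Fin (k + 3) → Sym2 (Unit ⊕ Fin (k + 3))
  | .inl i => s(.inl (), .inr i)
  | .inr i => s(.inr i, .inr (i + 1))

theorem fin_add_one_ne {k : ℕ} (i : Fin (k + 3)) : i + 1 ≠ i := by
  simp

theorem fin_two_ne (k : ℕ) : (1 + 1 : Fin (k + 3)) ≠ 0 := by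
  simp [Fin.ext_iff, Fin.val_add, Nat.mod_eq_of_lt (show 2 < k + 3 by omega)]

theorem fin_add_two_ne {k : ℕ} (i : Fin (k + 3)) : i + 1 + 1 ≠ i := by
  rw [add_assoc]
  simpa using fin_two_ne k

theorem wheelEdge_injective (k : ℕ) : Function.Injective (wheelEdge k) := by
  rintro (i | i) (j | j) h
  · simpa [wheelEdge] using h
  · simp [wheelEdge] at h
  · simp [wheelEdge] at h
  · have h' : (i = j ∧ i + 1 = j + 1) ∨ (i = j + 1 ∧ i + 1 = j) := by
      simpa [wheelEdge] using h
    rcases h' with h' | ⟨rfl, h'⟩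
    · rw [h'.1]
    · exact absurd h' (fin_add_two_ne j)

theorem mem_edgeSet_wheelGraph {k : ℕ} {e : Sym2 (Unit ⊕ Fin (k + 3))} :
    e ∈ (wheelGraph (k + 3)).edgeSet ↔ ∃ x, wheelEdge k x = e := by
  constructor
  · induction e with
    | h x y =>
      rw [SimpleGraph.mem_edgeSet]
      rcases x with ⟨⟩ | a <;> rcases y with ⟨⟩ | b <;> intro h
      · simp [wheelGraph] at h
      · exact ⟨.inl b, rfl⟩
      · exact ⟨.inl a, Sym2.eq_swap⟩
      · have h' : (cycleGraph (k + 1 + 2)).Adj a b := by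
          rcases h with ⟨-, h | h⟩
          exacts [h, h.symm]
        rw [cycleGraph_adj] at h'
        rcases h' with h' | h'
        · obtain rfl := eq_add_of_sub_eq' h'
          exact ⟨.inr b, Sym2.eq_swap⟩
        · obtain rfl := eq_add_of_sub_eq' h'
          exact ⟨.inr a, rfl⟩
  · rintro ⟨i | i, rfl⟩
    · exact ⟨by simp, Or.inl trivial⟩
    · refine ⟨by simp, Or.inl ?_⟩
      change (cycleGraph (k + 1 + 2)).Adj i (i + 1)
      rw [cycleGraph_adj]
      right
      simp

theorem edgeAdj_spoke_spoke {k : ℕ} {i j : Fin (k + 3)} (h : i ≠ j) :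
    edgeAdj (wheelEdge k (.inl i)) (wheelEdge k (.inl j)) :=
  ⟨fun he => h (Sum.inl_injective (wheelEdge_injective k he)), .inl (), by simp [wheelEdge]⟩

theorem edgeAdj_spoke_rim {k : ℕ} {i j : Fin (k + 3)} :
    edgeAdj (wheelEdge k (.inl i)) (wheelEdge k (.inr j)) ↔ i = j ∨ i = j + 1 := by
  simp [edgeAdj, wheelEdge]

theorem edgeAdj_comm' {V : Type*} {e f : Sym2 V} : edgeAdj e f ↔ edgeAdj f e := by
  simp only [edgeAdj, ne_comm, and_comm]

theorem edgeAdj_rim_succ {k : ℕ} (i : Fin (k + 3)) :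
    edgeAdj (wheelEdge k (.inr i)) (wheelEdge k (.inr (i + 1))) :=
  ⟨fun he => fin_add_one_ne i (Sum.inr_injective (wheelEdge_injective k he)).symm,
    .inr (i + 1), by simp [wheelEdge]⟩

/-- The optimal coloring: the spoke at `i` gets color `i`, the rim edge `{i, i + 1}` gets color
`i - 1` (cyclically), and non-edges get the junk color `0`. -/
noncomputable def wheelColoring (k : ℕ) : Sym2 (Unit ⊕ Fin (k + 3)) → ℕ :=
  Function.extend (wheelEdge k) (Sum.elim (fun i => i.val) (fun i => (i - 1).val)) 0

theorem wheelColoring_spoke {k : ℕ} (i : Fin (k + 3)) :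
    wheelColoring k (wheelEdge k (.inl i)) = i.val :=
  (wheelEdge_injective k).extend_apply _ _ _

theorem wheelColoring_rim {k : ℕ} (i : Fin (k + 3)) :
    wheelColoring k (wheelEdge k (.inr i)) = (i - 1).val :=
  (wheelEdge_injective k).extend_apply _ _ _

theorem wheelColoring_spoke_ne_rim {k : ℕ} {i j : Fin (k + 3)}
    (h : edgeAdj (wheelEdge k (.inl i)) (wheelEdge k (.inr j))) :
    wheelColoring k (wheelEdge k (.inl i)) ≠ wheelColoring k (wheelEdge k (.inr j)) := by
  rw [wheelColoring_spoke, wheelColoring_rim, Ne, Fin.val_inj, eq_sub_iff_add_eq]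
  rcases edgeAdj_spoke_rim.1 h with rfl | rfl
  exacts [fin_add_one_ne _, fin_add_two_ne _]

theorem isTDEColoring_wheelColoring (k : ℕ) :
    IsTDEColoring (wheelGraph (k + 3)) (k + 3) (wheelColoring k) := by
  refine ⟨fun e he => ?_, fun e he f hf h => ?_, fun e he => ?_⟩
  · obtain ⟨i | i, rfl⟩ := mem_edgeSet_wheelGraph.1 he
    · rw [wheelColoring_spoke]
      exact i.isLt
    · rw [wheelColoring_rim]
      exact (i - 1).isLt
  · obtain ⟨i | i, rfl⟩ := mem_edgeSet_wheelGraph.1 he <;>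
      obtain ⟨j | j, rfl⟩ := mem_edgeSet_wheelGraph.1 hf
    · rw [wheelColoring_spoke, wheelColoring_spoke, Ne, Fin.val_inj]
      rintro rfl
      exact h.1 rfl
    · exact wheelColoring_spoke_ne_rim h
    · exact (wheelColoring_spoke_ne_rim (edgeAdj_comm'.1 h)).symm
    · rw [wheelColoring_rim, wheelColoring_rim, Ne, Fin.val_inj, sub_left_inj]
      rintro rfl
      exact h.1 rfl
  · obtain ⟨j | j, rfl⟩ := mem_edgeSet_wheelGraph.1 he
    · refine ⟨(j - 1).val, ⟨_, mem_edgeSet_wheelGraph.2 ⟨.inl (j - 1), rfl⟩,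
        wheelColoring_spoke _⟩, fun f hf hc => ?_⟩
      obtain ⟨i | i, rfl⟩ := mem_edgeSet_wheelGraph.1 hf
      · rw [wheelColoring_spoke, Fin.val_inj, eq_sub_iff_add_eq] at hc
        subst hc
        exact edgeAdj_spoke_spoke (fin_add_one_ne i)
      · rw [wheelColoring_rim, Fin.val_inj, sub_left_inj] at hc
        exact edgeAdj_spoke_rim.2 (.inl hc.symm)
    · refine ⟨j.val, ⟨_, mem_edgeSet_wheelGraph.2 ⟨.inl j, rfl⟩, wheelColoring_spoke _⟩,
        fun f hf hc => ?_⟩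
      obtain ⟨i | i, rfl⟩ := mem_edgeSet_wheelGraph.1 hf
      · rw [wheelColoring_spoke, Fin.val_inj] at hc
        exact edgeAdj_comm'.1 (edgeAdj_spoke_rim.2 (.inl hc))
      · rw [wheelColoring_rim, Fin.val_inj, sub_eq_iff_eq_add] at hc
        subst hc
        exact edgeAdj_rim_succ j

/-- The spokes pairwise share the hub, so they receive distinct colors. -/
theorem le_of_isTDEColoring {k n : ℕ} {c : Sym2 (Unit ⊕ Fin (k + 3)) → ℕ}
    (h : IsTDEColoring (wheelGraph (k + 3)) n c) : k + 3 ≤ n := by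
  have hmem (i : Fin (k + 3)) : wheelEdge k (.inl i) ∈ (wheelGraph (k + 3)).edgeSet :=
    mem_edgeSet_wheelGraph.2 ⟨_, rfl⟩
  let g : Fin (k + 3) → Fin n := fun i => ⟨c (wheelEdge k (.inl i)), h.1 _ (hmem i)⟩
  have hg : Function.Injective g := fun i j hij => by
    by_contra hne
    exact h.2.1 _ (hmem i) _ (hmem j) (edgeAdj_spoke_spoke hne) (congrArg Fin.val hij)
  simpa using Fintype.card_le_of_injective g hg

/-- For n ≥ 4, the wheel graph Wₙ of order n satisfies χ'ᵗ_d(Wₙ) = n − 1. -/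
theorem tdec_wheelGraph (n : ℕ) (hn : 4 ≤ n) :
    tdec (wheelGraph (n - 1)) = n - 1 := by
  obtain ⟨k, rfl⟩ := Nat.exists_eq_add_of_le' hn
  change tdec (wheelGraph (k + 3)) = k + 3
  exact IsLeast.csInf_eq
    ⟨⟨wheelColoring k, isTDEColoring_wheelColoring k⟩, fun _ ⟨_, hc⟩ => le_of_isTDEColoring hc⟩
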